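/- Let 𝔗𝔏_2 = ({0,1,2}; C_3, T, L_2) and let 𝔄 be the structure with domain {0,1,2}^2 and relations C_3^A := {((x_1,x_2),(y_1,y_2)) : (x_1,y_1) ∈ C_3 and (y_2,x_2) ∈ C_3}, T^A := {((x_1,x_2),(y_1,y_2)) : x_1=y_2 and x_2=y_1}, and L_2^A := {((x_1,x_2),(y_1,y_2),(z_1,z_2)) : (x_1,y_1,z_1) ∈ L_2, (x_1,x_2,1) ∈ L_2, (y_1,y_2,1) ∈ L_2, (z_1,z_2,1) ∈ L_2}. Then the map g with g(0)=(0,1), g(1)=(1,0), g(2)=(2,2) is a homomorphism from 𝔗𝔏_2 to 𝔄, and the map h with h(x,y)=0 if (x,y) ∈ C_3, h(x,y)=1 if (y,x) ∈ C_3, and h(x,y)=2 if x=y, is a homomorphism from 𝔄 to 𝔗𝔏_2. In particular 𝔗𝔏_2 and 𝔄 are homomorphically equivalent. -/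

import Mathlib

/-- The three-element domain `{0,1,2}`. -/
abbrev D3 : Type := Fin 3

/-- `C₃ = {(0,1),(1,2),(2,0)}`. -/
def C3P (a b : D3) : Prop := (a = 0 ∧ b = 1) ∨ (a = 1 ∧ b = 2) ∨ (a = 2 ∧ b = 0)

instance (a b : D3) : Decidable (C3P a b) := by unfold C3P; infer_instance

/-- `T = {(0,1),(1,0),(2,2)}`. -/
def TP (a b : D3) : Prop := (a = 0 ∧ b = 1) ∨ (a = 1 ∧ b = 0) ∨ (a = 2 ∧ b = 2)

/-- `L₂ = {(x,y,z) ∈ {0,1}³ : x + y + z ≡ 0 (mod 2)}`. -/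
def L2P (a b c : D3) : Prop :=
  (a = 0 ∨ a = 1) ∧ (b = 0 ∨ b = 1) ∧ (c = 0 ∨ c = 1) ∧ (a.val + b.val + c.val) % 2 = 0

/-- The relation `C₃^𝔄` on `{0,1,2}²`. -/
def C3A (x y : D3 × D3) : Prop := C3P x.1 y.1 ∧ C3P y.2 x.2

/-- The relation `T^𝔄` on `{0,1,2}²`. -/
def TA (x y : D3 × D3) : Prop := x.1 = y.2 ∧ x.2 = y.1

/-- The relation `L₂^𝔄` on `{0,1,2}²`. -/
def L2A (x y z : D3 × D3) : Prop :=
  L2P x.1 y.1 z.1 ∧ L2P x.1 x.2 1 ∧ L2P y.1 y.2 1 ∧ L2P z.1 z.2 1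

/-- The map `g` with `g(0) = (0,1)`, `g(1) = (1,0)`, `g(2) = (2,2)`. -/
def gMap : D3 → D3 × D3 := ![(0,1), (1,0), (2,2)]

/-- The map `h` with `h(x,y) = 0` if `(x,y) ∈ C₃`, `h(x,y) = 1` if `(y,x) ∈ C₃`,
and `h(x,y) = 2` if `x = y`. -/
def hMap : D3 × D3 → D3 := fun p =>
  if C3P p.1 p.2 then 0 else if C3P p.2 p.1 then 1 else 2

/-- `g` is a homomorphism from `𝔗𝔏₂` to `𝔄`. -/
def IsHomTL2toA (g : D3 → D3 × D3) : Prop :=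
  (∀ a b : D3, C3P a b → C3A (g a) (g b)) ∧
  (∀ a b : D3, TP a b → TA (g a) (g b)) ∧
  (∀ a b c : D3, L2P a b c → L2A (g a) (g b) (g c))

/-- `h` is a homomorphism from `𝔄` to `𝔗𝔏₂`. -/
def IsHomAtoTL2 (h : D3 × D3 → D3) : Prop :=
  (∀ x y : D3 × D3, C3A x y → C3P (h x) (h y)) ∧
  (∀ x y : D3 × D3, TA x y → TP (h x) (h y)) ∧
  (∀ x y z : D3 × D3, L2A x y z → L2P (h x) (h y) (h z))

/-! Read `{0,1,2}` as the field with three elements. Then `C₃` is the graph of `a ↦ a + 1` and `T`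
that of `a ↦ 1 - a`, while `g a = (a, 1 - a)` and `h (x, y) = y - x - 1`, so `h` retracts `g`, and
preservation of `C₃` and `T` is linear algebra in characteristic three. The conditions
`(x, y, 1) ∈ L₂` in `L₂^𝔄` say that `(x, y)` is the `g`-image of its first coordinate, so `L₂^𝔄` is
exactly the `g`-image of `L₂`, on which `h` inverts `g`. -/

section AffineDescription

variable {a b : D3}

theorem c3P_iff_eq_add_one : C3P a b ↔ b = a + 1 := by
  decide +revert

theorem tP_iff_eq_one_sub : TP a b ↔ b = 1 - a := by
  unfold TP
  decide +revert

theorem gMap_apply (a : D3) : gMap a = (a, 1 - a) := by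
  decide +revert

theorem hMap_apply (x : D3 × D3) : hMap x = x.2 - x.1 - 1 := by
  decide +revert

theorem l2P_one_iff : L2P a b 1 ↔ (a = 0 ∨ a = 1) ∧ b = 1 - a := by
  unfold L2P
  decide +revert

end AffineDescription

theorem leftInverse_hMap_gMap : Function.LeftInverse hMap gMap := fun a => by
  have add_add_self_eq_zero : a + a + a = 0 := by decide +revert
  calc
    hMap (gMap a) = 1 - a - a - 1 := by rw [gMap_apply, hMap_apply]
    _ = a - (a + a + a) := by abel
    _ = a := by rw [add_add_self_eq_zero, sub_zero]

section Embedding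

variable {a b c : D3}

theorem c3A_gMap_iff : C3A (gMap a) (gMap b) ↔ C3P a b := by
  simp only [C3A, gMap_apply, c3P_iff_eq_add_one, and_iff_left_iff_imp]
  rintro rfl
  abel

theorem tA_gMap_iff : TA (gMap a) (gMap b) ↔ TP a b := by
  simp only [TA, gMap_apply, tP_iff_eq_one_sub, eq_comm (a := b), and_iff_right_iff_imp]
  rintro rfl
  abel

theorem l2A_iff {x y z : D3 × D3} :
    L2A x y z ↔ L2P x.1 y.1 z.1 ∧ gMap x.1 = x ∧ gMap y.1 = y ∧ gMap z.1 = z := by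
  have l2P_one_iff_gMap_eq {p : D3 × D3} (hp : p.1 = 0 ∨ p.1 = 1) :
      L2P p.1 p.2 1 ↔ gMap p.1 = p := by
    simp only [l2P_one_iff, hp, true_and, gMap_apply, Prod.ext_iff, eq_comm (a := p.2)]
  refine and_congr_right fun h => ?_
  obtain ⟨hx, hy, hz, -⟩ := h
  rw [l2P_one_iff_gMap_eq hx, l2P_one_iff_gMap_eq hy, l2P_one_iff_gMap_eq hz]

theorem l2A_gMap_iff : L2A (gMap a) (gMap b) (gMap c) ↔ L2P a b c := by
  simp only [l2A_iff, gMap_apply, and_true]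

end Embedding

section Retraction

variable {x y z : D3 × D3}

theorem C3A.c3P_hMap (hxy : C3A x y) : C3P (hMap x) (hMap y) := by
  obtain ⟨hfst, hsnd⟩ := hxy
  rw [c3P_iff_eq_add_one] at hfst hsnd ⊢
  have neg_two_eq_one : -(1 + 1) = (1 : D3) := rfl
  calc
    hMap y = y.2 - (x.1 + 1) - 1 := by rw [hMap_apply, hfst]
    _ = y.2 + 1 - x.1 - 1 + -(1 + 1) := by abel
    _ = hMap x + 1 := by rw [hMap_apply, hsnd, neg_two_eq_one]

theorem TA.tP_hMap (hxy : TA x y) : TP (hMap x) (hMap y) := by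
  obtain ⟨hfst, hsnd⟩ := hxy
  rw [tP_iff_eq_one_sub]
  have neg_one_eq_two : (-1 : D3) = 1 + 1 := rfl
  calc
    hMap y = x.1 - x.2 + -1 := by rw [hMap_apply, hfst, hsnd, sub_eq_add_neg _ 1]
    _ = 1 - (x.2 - x.1 - 1) := by rw [neg_one_eq_two]; abel
    _ = 1 - hMap x := by rw [hMap_apply]

theorem L2A.l2P_hMap (hxyz : L2A x y z) : L2P (hMap x) (hMap y) (hMap z) := by
  obtain ⟨h, hx, hy, hz⟩ := l2A_iff.1 hxyz
  rw [← hx, ← hy, ← hz]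
  simpa only [leftInverse_hMap_gMap _] using h

end Retraction

theorem isHomTL2toA_gMap : IsHomTL2toA gMap :=
  ⟨fun _ _ => c3A_gMap_iff.2, fun _ _ => tA_gMap_iff.2, fun _ _ _ => l2A_gMap_iff.2⟩

theorem isHomAtoTL2_hMap : IsHomAtoTL2 hMap :=
  ⟨fun _ _ => C3A.c3P_hMap, fun _ _ => TA.tP_hMap, fun _ _ _ => L2A.l2P_hMap⟩

theorem stmt8 :
    IsHomTL2toA gMap ∧ IsHomAtoTL2 hMap ∧
    (∃ (g : D3 → D3 × D3) (h : D3 × D3 → D3), IsHomTL2toA g ∧ IsHomAtoTL2 h) :=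
  ⟨isHomTL2toA_gMap, isHomAtoTL2_hMap, gMap, hMap, isHomTL2toA_gMap, isHomAtoTL2_hMap⟩
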